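/- Let S be a nonzero zero-divisor-free (ZDF) commutative Γ-semiring with a left unity and a right unity, and let L be its left operator semiring (which contains the identity endomorphism, since S has a left unity). Then S is a Γ-semifield if and only if L is a semifield, i.e., composition on L is commutative and for every f ∈ L with f ≠ 0 there exists g ∈ L with f ∘ g equal to the identity map of S. -/

import Mathlib

/-!
Every `f ∈ L` commutes with multiplication on the right: `f (a α b) = (f a) α b`. For commutative
`S` this makes `L` commutative, since `f (ℓ(x,α) a) = f (a α x) = (f a) α x = ℓ(x,α) (f a)`.

If `S` is a `Γ`-semifield and `f c ≠ 0`, choose `α ≠ 0` (the right unity provides one); an inverse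
`(f c) α b β d = d` reads `f ((c α b) β d) = d`, so `ℓ(c α b, β)` is inverse to `f`.

Conversely, for `a ≠ 0` and `α ≠ 0`, zero-divisor freeness gives `ℓ(a,α) ≠ 0`. An inverse `g` of
`ℓ(a,α)` is a priori only a sum of maps `ℓ(x,β)`, but the maps `ℓ(x,α)` with `α` fixed form a
left ideal containing a unit; explicitly `g = ℓ(g (g a), α)`, which gives the required element
`b = g (g a)` and `β = α`.
-/

instance : Fact ((0:ℝ) ≤ 1) := ⟨zero_le_one⟩

/-- A `Γ`-semiring structure on additive commutative monoids `S` and `Γ`. -/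
structure GammaSemiring (S Γ : Type*) [AddCommMonoid S] [AddCommMonoid Γ] where
  tmul : S → Γ → S → S
  add_left : ∀ (a b : S) (α : Γ) (c : S), tmul (a + b) α c = tmul a α c + tmul b α c
  add_right : ∀ (a : S) (α : Γ) (b c : S), tmul a α (b + c) = tmul a α b + tmul a α c
  add_mid : ∀ (a : S) (α β : Γ) (b : S), tmul a (α + β) b = tmul a α b + tmul a β b
  tmul_assoc : ∀ (a : S) (α : Γ) (b : S) (β : Γ) (c : S),
    tmul a α (tmul b β c) = tmul (tmul a α b) β c
  zero_left : ∀ (α : Γ) (x : S), tmul 0 α x = 0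
  zero_right : ∀ (x : S) (α : Γ), tmul x α 0 = 0
  zero_mid : ∀ (x y : S), tmul x 0 y = 0

namespace GammaSemiring

variable {S Γ : Type*} [AddCommMonoid S] [AddCommMonoid Γ]

/-- The left translation map `ℓ(x,α) : a ↦ xαa`. -/
def ell (G : GammaSemiring S Γ) (x : S) (α : Γ) : S → S := fun a => G.tmul x α a

/-- Membership in the left operator semiring: the additive closure of the maps `ℓ(x,α)`. -/
inductive InL (G : GammaSemiring S Γ) : (S → S) → Prop
  | basic (x : S) (α : Γ) : InL G (G.ell x α)
  | add {f g : S → S} : InL G f → InL G g → InL G (f + g)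

lemma inL_zero (G : GammaSemiring S Γ) : G.InL (0 : S → S) := by
  have h : G.ell (0 : S) (0 : Γ) = (0 : S → S) := funext fun a => G.zero_left 0 a
  exact h ▸ InL.basic 0 0

lemma InL.comp {G : GammaSemiring S Γ} {f g : S → S} (hf : G.InL f) (hg : G.InL g) :
    G.InL (f ∘ g) := by
  induction hf with
  | basic x α =>
    induction hg with
    | basic y β =>
      have h : G.ell x α ∘ G.ell y β = G.ell (G.tmul x α y) β :=
        funext fun a => G.tmul_assoc x α y β a
      exact h ▸ InL.basic _ _
    | add hg₁ hg₂ ih₁ ih₂ =>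
      rename_i g₁ g₂
      have h : G.ell x α ∘ (g₁ + g₂) = (G.ell x α ∘ g₁) + (G.ell x α ∘ g₂) :=
        funext fun a => G.add_right x α (g₁ a) (g₂ a)
      exact h ▸ InL.add ih₁ ih₂
  | add hf₁ hf₂ ih₁ ih₂ =>
    rename_i f₁ f₂
    have h : (f₁ + f₂) ∘ g = (f₁ ∘ g) + (f₂ ∘ g) := rfl
    exact h ▸ InL.add ih₁ ih₂

/-- The left operator semiring `L` of a `Γ`-semiring, as a type: the subtype of
maps `S → S` belonging to the additive closure of the `ℓ(x,α)`. -/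
def LOp (G : GammaSemiring S Γ) : Type _ := {f : S → S // G.InL f}

/-- The zero element of `L` is the zero map. -/
instance (G : GammaSemiring S Γ) : Zero G.LOp := ⟨⟨0, G.inL_zero⟩⟩

/-- Addition in `L` is pointwise addition of maps. -/
instance (G : GammaSemiring S Γ) : Add G.LOp := ⟨fun f g => ⟨f.1 + g.1, f.2.add g.2⟩⟩

/-- Multiplication in `L` is composition of maps. -/
instance (G : GammaSemiring S Γ) : Mul G.LOp := ⟨fun f g => ⟨f.1 ∘ g.1, f.2.comp g.2⟩⟩

/-- `S` has a left unity `∑ᵢ [eᵢ, δᵢ]`, i.e. `∑ᵢ eᵢ δᵢ a = a` for all `a ∈ S`. -/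
def HasLeftUnity (G : GammaSemiring S Γ) : Prop :=
  ∃ (n : ℕ) (e : Fin n → S) (δ : Fin n → Γ), ∀ a : S, ∑ i, G.tmul (e i) (δ i) a = a

/-- `S` has a right unity `∑ⱼ [γⱼ, fⱼ]`, i.e. `∑ⱼ a γⱼ fⱼ = a` for all `a ∈ S`. -/
def HasRightUnity (G : GammaSemiring S Γ) : Prop :=
  ∃ (n : ℕ) (γ : Fin n → Γ) (f : Fin n → S), ∀ a : S, ∑ j, G.tmul a (γ j) (f j) = a

/-- A fuzzy ideal of the `Γ`-semiring `S`: a `[0,1]`-valued function with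
`σ(0) = 1`, `σ(x+y) ≥ min(σ(x),σ(y))` and `σ(xγy) ≥ max(σ(x),σ(y))`. -/
def IsFuzzyIdeal (G : GammaSemiring S Γ) (sigma : S → unitInterval) : Prop :=
  sigma 0 = 1 ∧ (∀ x y : S, min (sigma x) (sigma y) ≤ sigma (x + y)) ∧
    ∀ (x : S) (γ : Γ) (y : S), max (sigma x) (sigma y) ≤ sigma (G.tmul x γ y)

/-- A fuzzy ideal of the left operator semiring `L`. -/
def IsFuzzyIdealL (G : GammaSemiring S Γ) (mu : G.LOp → unitInterval) : Prop :=
  mu 0 = 1 ∧ (∀ f g : G.LOp, min (mu f) (mu g) ≤ mu (f + g)) ∧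
    ∀ f g : G.LOp, max (mu f) (mu g) ≤ mu (f * g)

/-- A fuzzy subset is non-constant if it takes at least two distinct values. -/
def NonConstant {X : Type*} (mu : X → unitInterval) : Prop := ∃ a b : X, mu a ≠ mu b

/-- `μ⁺(x) = inf_{γ ∈ Γ} μ(ℓ(x,γ))` for a fuzzy subset `μ` of `L`. -/
noncomputable def plus (G : GammaSemiring S Γ) (mu : G.LOp → unitInterval) :
    S → unitInterval :=
  fun x => ⨅ γ : Γ, mu ⟨G.ell x γ, InL.basic x γ⟩

/-- `σ⁺'(f) = inf_{s ∈ S} σ(f(s))` for a fuzzy subset `σ` of `S`. -/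
noncomputable def plusPrime (G : GammaSemiring S Γ) (sigma : S → unitInterval) :
    G.LOp → unitInterval :=
  fun f => ⨅ s : S, sigma (f.1 s)

/-- The sum `μ₁ ⊕ μ₂` of two fuzzy subsets:
`(μ₁ ⊕ μ₂)(x) = sup { min(μ₁(u), μ₂(v)) : u + v = x }`. -/
noncomputable def fuzzySum {X : Type*} [Add X] (mu₁ mu₂ : X → unitInterval) :
    X → unitInterval :=
  fun x => sSup {r : unitInterval | ∃ u v : X, u + v = x ∧ r = min (mu₁ u) (mu₂ v)}

end GammaSemiring
namespace GammaSemiring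

variable {S Γ : Type*} [AddCommMonoid S] [AddCommMonoid Γ]

/-- An ideal of the `Γ`-semiring `S`: a nonempty subset closed under addition and under
multiplication by elements of `S` on either side. -/
def IsIdeal (G : GammaSemiring S Γ) (A : Set S) : Prop :=
  A.Nonempty ∧ (∀ a ∈ A, ∀ b ∈ A, a + b ∈ A) ∧
    ∀ a ∈ A, ∀ (x : S) (γ : Γ), G.tmul x γ a ∈ A ∧ G.tmul a γ x ∈ A

/-- An ideal of the left operator semiring `L`. -/
def IsIdealL (G : GammaSemiring S Γ) (J : Set G.LOp) : Prop :=
  J.Nonempty ∧ (∀ f ∈ J, ∀ g ∈ J, f + g ∈ J) ∧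
    ∀ f ∈ J, ∀ g : G.LOp, f * g ∈ J ∧ g * f ∈ J

/-- `I⁺' = { f ∈ L : f(s) ∈ I for all s ∈ S }` for a subset `I` of `S`. -/
def idealPlusPrime (G : GammaSemiring S Γ) (A : Set S) : Set G.LOp :=
  {f : G.LOp | ∀ s : S, f.1 s ∈ A}

/-- `J⁺ = { a ∈ S : ℓ(a,γ) ∈ J for all γ ∈ Γ }` for a subset `J` of `L`. -/
def idealPlus (G : GammaSemiring S Γ) (J : Set G.LOp) : Set S :=
  {a : S | ∀ γ : Γ, (⟨G.ell a γ, InL.basic a γ⟩ : G.LOp) ∈ J}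

/-- `S` is zero-divisor free: `aαb = 0` implies `a = 0` or `α = 0` or `b = 0`. -/
def ZDF (G : GammaSemiring S Γ) : Prop :=
  ∀ (a : S) (α : Γ) (b : S), G.tmul a α b = 0 → a = 0 ∨ α = 0 ∨ b = 0

/-- `S` is a commutative `Γ`-semiring: `aαb = bαa`. -/
def IsCommutative (G : GammaSemiring S Γ) : Prop :=
  ∀ (a : S) (α : Γ) (b : S), G.tmul a α b = G.tmul b α a

/-- A commutative `Γ`-semiring `S` is a `Γ`-semifield if for all `a ≠ 0` and `α ≠ 0` there
are `b ∈ S`, `β ∈ Γ` with `aαbβd = d` for all `d ∈ S`. -/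
def IsGammaSemifield (G : GammaSemiring S Γ) : Prop :=
  G.IsCommutative ∧ ∀ a : S, a ≠ 0 → ∀ α : Γ, α ≠ 0 →
    ∃ (b : S) (β : Γ), ∀ d : S, G.tmul (G.tmul a α b) β d = d

/-- The `Γₙ`-semiring product on `n × n` matrices:
`(A Δ B) i j = ∑ t ∑ k, (A i t) (Δ t k) (B k j)`. -/
def matTmul (G : GammaSemiring S Γ) {n : ℕ} (A : Matrix (Fin n) (Fin n) S)
    (D : Matrix (Fin n) (Fin n) Γ) (B : Matrix (Fin n) (Fin n) S) :
    Matrix (Fin n) (Fin n) S :=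
  Matrix.of fun i j => ∑ t, ∑ k, G.tmul (A i t) (D t k) (B k j)

/-- A fuzzy ideal of the matrix `Γₙ`-semiring `Sₙ`, defined in the same way as for `S`,
with `Sₙ`, `Γₙ` in place of `S`, `Γ`. -/
def IsFuzzyIdealMatrix (G : GammaSemiring S Γ) {n : ℕ}
    (mu : Matrix (Fin n) (Fin n) S → unitInterval) : Prop :=
  mu 0 = 1 ∧ (∀ A B : Matrix (Fin n) (Fin n) S, min (mu A) (mu B) ≤ mu (A + B)) ∧
    ∀ (A : Matrix (Fin n) (Fin n) S) (D : Matrix (Fin n) (Fin n) Γ)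
      (B : Matrix (Fin n) (Fin n) S), max (mu A) (mu B) ≤ mu (G.matTmul A D B)

end GammaSemiring

open Classical in
/-- The characteristic function of a subset, as a fuzzy subset. -/
noncomputable def fuzzyIndicator {X : Type*} (A : Set X) : X → unitInterval :=
  fun x => if x ∈ A then 1 else 0

/-- `μₙ`, the fuzzy subset of `Sₙ` induced by a fuzzy subset `μ` of `S`:
`μₙ(A) = min { μ(Aᵢⱼ) : 1 ≤ i,j ≤ n }`. -/
noncomputable def matFuzzy {S : Type*} {n : ℕ} (mu : S → unitInterval) :
    Matrix (Fin n) (Fin n) S → unitInterval :=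
  fun A => ⨅ i, ⨅ j, mu (A i j)


variable {S Γ : Type*} [AddCommMonoid S] [AddCommMonoid Γ]

namespace GammaSemiring

lemma InL.map_tmul {G : GammaSemiring S Γ} {f : S → S} (hf : G.InL f) (a : S) (α : Γ) (b : S) :
    f (G.tmul a α b) = G.tmul (f a) α b := by
  induction hf with
  | basic x β => exact G.tmul_assoc x β a α b
  | add _ _ ih₁ ih₂ => simp only [Pi.add_apply, ih₁, ih₂, G.add_left]

/-- The left operator semiring of a commutative `Γ`-semiring is commutative. -/
lemma InL.apply_comm {G : GammaSemiring S Γ} (hComm : G.IsCommutative) {f g : S → S}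
    (hf : G.InL f) (hg : G.InL g) (a : S) : f (g a) = g (f a) := by
  -- Only generators `f = ℓ(x,α)` use commutativity of `S`; sums need in addition that `g` is additive.
  induction hf with
  | basic x α =>
    change G.tmul x α (g a) = g (G.tmul x α a)
    rw [hComm x α (g a), hComm x α a, hg.map_tmul]
  | @add f₁ f₂ _ _ ih₁ ih₂ =>
    have hadd : ∀ u v : S, g (u + v) = g u + g v := by
      clear ih₁ ih₂
      induction hg with
      | basic y β => exact fun u v => G.add_right y β u v
      | add _ _ h₁ h₂ =>
        intro u v
        simp only [Pi.add_apply, h₁, h₂]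
        exact add_add_add_comm _ _ _ _
    simp only [Pi.add_apply, ih₁, ih₂, hadd]

lemma HasRightUnity.exists_ne_zero {G : GammaSemiring S Γ} (hRU : G.HasRightUnity)
    (hnz : ∃ x : S, x ≠ 0) : ∃ α : Γ, α ≠ 0 := by
  by_contra! h
  obtain ⟨n, γ, f, hf⟩ := hRU
  obtain ⟨x, hx⟩ := hnz
  refine hx ?_
  rw [← hf x]
  exact Finset.sum_eq_zero fun i _ => by rw [h (γ i), G.zero_mid]

end GammaSemiring

/-- A nonzero ZDF commutative `Γ`-semiring `S` (with left and right unity)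
is a `Γ`-semifield iff its left operator semiring `L` is a semifield, i.e. composition on
`L` is commutative and every nonzero `f ∈ L` has some `g ∈ L` with `f ∘ g` the identity
map of `S`. -/
theorem gammaSemifield_iff_LOp_semifield (G : GammaSemiring S Γ)
    (hComm : G.IsCommutative) (hZDF : G.ZDF)
    (hLU : G.HasLeftUnity) (hRU : G.HasRightUnity)
    (hnz : ∃ x : S, x ≠ 0) :
    G.IsGammaSemifield ↔
      ((∀ f g : G.LOp, f * g = g * f) ∧
        ∀ f : G.LOp, f ≠ 0 → ∃ g : G.LOp, (f * g).1 = (id : S → S)) := by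
  constructor
  · rintro ⟨-, hinv⟩
    refine ⟨fun f g => Subtype.ext (funext (f.2.apply_comm hComm g.2)), fun f hf => ?_⟩
    obtain ⟨c, hc⟩ : ∃ c, f.1 c ≠ 0 := by
      by_contra! h
      exact hf (Subtype.ext (funext h))
    obtain ⟨α, hα⟩ := hRU.exists_ne_zero hnz
    obtain ⟨b, β, hb⟩ := hinv (f.1 c) hc α hα
    refine ⟨⟨_, .basic (G.tmul c α b) β⟩, funext fun d => ?_⟩
    change f.1 (G.tmul (G.tmul c α b) β d) = d
    rw [f.2.map_tmul, f.2.map_tmul, hb]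
  · rintro ⟨-, hinv⟩
    refine ⟨hComm, fun a ha α hα => ?_⟩
    obtain ⟨g, hg⟩ := hinv ⟨G.ell a α, .basic a α⟩ fun h => by
      have h0 : G.tmul a α a = 0 := congrFun (congrArg Subtype.val h) a
      rcases hZDF a α a h0 with h | h | h <;> contradiction
    have hg₁ : ∀ d, G.tmul a α (g.1 d) = d := congrFun hg
    have hg₂ : ∀ d, g.1 (G.tmul a α d) = d := fun d =>
      (g.2.apply_comm hComm (.basic a α) d).trans (hg₁ d)
    refine ⟨g.1 (g.1 a), α, fun d => ?_⟩
    rw [hg₁, ← g.2.map_tmul, hg₂]
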